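/- Let ν ≥ 1 be an integer and let a, b > 0 with a ≠ b be two zeros of J_ν (i.e. J_ν(a) = J_ν(b) = 0). Then ∫_0^1 r^2 J_{ν−1}(a r) J_ν(b r) dr = b J_{ν+1}(a) J_{ν+1}(b) / (a^2 − b^2). -/

import Mathlib

open MeasureTheory

/-- Bessel function of the first kind of integer order `ν`, defined by its
everywhere-convergent power series. -/
noncomputable def besselJ (ν : ℕ) (x : ℝ) : ℝ :=
  ∑' m : ℕ, ((-1 : ℝ) ^ m / ((Nat.factorial m : ℝ) * (Nat.factorial (m + ν) : ℝ)))
    * (x / 2) ^ (2 * m + ν)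

/-!
Write `n = ν - 1`. The relations `x Jₙ' = n Jₙ - x Jₙ₊₁` and `x Jₙ₊₁' = x Jₙ - (n + 1) Jₙ₊₁` give
`(r² (a Jₙ₊₁(ar) Jₙ₊₁(br) + b Jₙ(ar) Jₙ(br)))'
  = (a² - b²) r² Jₙ(ar) Jₙ₊₁(br) - 2na r Jₙ₊₁(ar) Jₙ₊₁(br) + 2(n + 1)b r Jₙ(ar) Jₙ(br)`.
When `a` and `b` are zeros of `Jₙ₊₁`, Lommel's integral shows that the last two terms integrate to
zero over `[0, 1]`, so only the boundary term `b Jₙ(a) Jₙ(b) = b Jₙ₊₂(a) Jₙ₊₂(b)` is left.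
-/

theorem hasDerivAt_tsum_mul_pow {𝕜 : Type*} [RCLike 𝕜] {c : ℕ → 𝕜}
    (hc : ∀ x, Summable fun m ↦ c m * x ^ m) (x : 𝕜) :
    HasDerivAt (fun x ↦ ∑' m, c m * x ^ m) (∑' m : ℕ, (m + 1) * c (m + 1) * x ^ m) x := by
  set R : ℝ := ‖x‖ + 1
  have hR : 1 ≤ R := le_add_of_nonneg_left (norm_nonneg x)
  have hx : x ∈ Metric.ball (0 : 𝕜) R := by simp [R]
  have hu : Summable fun m ↦ ‖c m‖ * (2 * R) ^ m := by
    refine (hc ((2 * R : ℝ) : 𝕜)).norm.congr fun m ↦ ?_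
    rw [norm_mul, norm_pow, RCLike.norm_of_nonneg (by positivity)]
  have norm_le (m : ℕ) (y : 𝕜) (hy : y ∈ Metric.ball 0 R) :
      ‖c m * (m * y ^ (m - 1))‖ ≤ ‖c m‖ * (2 * R) ^ m := by
    have hy : ‖y‖ ≤ R := (mem_ball_zero_iff.1 hy).le
    rw [norm_mul, norm_mul, norm_pow, RCLike.norm_natCast, mul_pow]
    gcongr
    · exact_mod_cast m.lt_two_pow_self.le
    · exact (pow_le_pow_left₀ (norm_nonneg y) hy _).trans (pow_le_pow_right₀ hR m.pred_le)
  refine (hasDerivAt_tsum_of_isPreconnected hu Metric.isOpen_ball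
    (convex_ball _ _).isPreconnected (fun m y _ ↦ (hasDerivAt_pow m y).const_mul (c m))
    norm_le hx (hc x) hx).congr_deriv ?_
  rw [(Summable.of_norm_bounded hu fun m ↦ norm_le m x hx).tsum_eq_zero_add]
  simp [mul_left_comm, mul_assoc]

/-- The coefficient of `yᵐ` in the Bessel–Clifford function of order `n`, normalised with the
sign `(-1)ᵐ` so that it serves `J` rather than the modified function `I`. -/
noncomputable def besselCliffordCoeff (n m : ℕ) : ℝ :=
  (-1) ^ m / (m.factorial * (m + n).factorial)

/-- The Bessel–Clifford function of order `n`: the entire function `Cₙ` for which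
`Jₙ(x) = (x / 2)ⁿ Cₙ(x² / 4)`. It turns statements about `J` into statements about
an ordinary power series. -/
noncomputable def besselClifford (n : ℕ) (y : ℝ) : ℝ :=
  ∑' m, besselCliffordCoeff n m * y ^ m

theorem succ_mul_besselCliffordCoeff_succ (n m : ℕ) :
    (m + 1) * besselCliffordCoeff n (m + 1) = -besselCliffordCoeff (n + 1) m := by
  rw [besselCliffordCoeff, besselCliffordCoeff, add_right_comm m 1 n, ← add_assoc m n 1,
    Nat.factorial_succ m]
  push_cast
  field_simp
  ring

theorem besselCliffordCoeff_eq_mul_besselCliffordCoeff_succ (n m : ℕ) :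
    besselCliffordCoeff n m = (m + n + 1) * besselCliffordCoeff (n + 1) m := by
  rw [besselCliffordCoeff, besselCliffordCoeff, ← add_assoc m n 1, Nat.factorial_succ (m + n)]
  push_cast
  field_simp

theorem abs_besselCliffordCoeff_le (n m : ℕ) :
    |besselCliffordCoeff n m| ≤ 1 / m.factorial := by
  have h : (1 : ℝ) ≤ (m + n).factorial := mod_cast (m + n).factorial_pos
  rw [besselCliffordCoeff, abs_div, abs_neg_one_pow, abs_of_pos (by positivity)]
  gcongr
  exact le_mul_of_one_le_right (by positivity) h

theorem summable_besselCliffordCoeff_mul_pow (n : ℕ) (y : ℝ) :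
    Summable fun m ↦ besselCliffordCoeff n m * y ^ m := by
  refine .of_norm_bounded (Real.summable_pow_div_factorial |y|) fun m ↦ ?_
  rw [Real.norm_eq_abs, abs_mul, abs_pow, div_eq_mul_one_div, mul_comm]
  gcongr
  exact abs_besselCliffordCoeff_le n m

theorem hasSum_besselClifford (n : ℕ) (y : ℝ) :
    HasSum (fun m ↦ besselCliffordCoeff n m * y ^ m) (besselClifford n y) :=
  (summable_besselCliffordCoeff_mul_pow n y).hasSum

theorem hasDerivAt_besselClifford (n : ℕ) (y : ℝ) :
    HasDerivAt (besselClifford n) (-besselClifford (n + 1) y) y := by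
  refine (hasDerivAt_tsum_mul_pow (summable_besselCliffordCoeff_mul_pow n) y).congr_deriv ?_
  simp only [succ_mul_besselCliffordCoeff_succ, neg_mul, tsum_neg, besselClifford]

theorem besselClifford_add_mul_besselClifford_add_two (n : ℕ) (y : ℝ) :
    besselClifford n y + y * besselClifford (n + 2) y = (n + 1) * besselClifford (n + 1) y := by
  have euler : HasSum (fun m : ℕ ↦ m * (besselCliffordCoeff (n + 1) m * y ^ m))
      (-(y * besselClifford (n + 2) y)) := by
    rw [← hasSum_nat_add_iff' 1]
    convert ((hasSum_besselClifford (n + 2) y).mul_left y).neg using 2 with m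
    · push_cast
      linear_combination y ^ (m + 1) * succ_mul_besselCliffordCoeff_succ (n + 1) m
    · simp
  have hsum := ((hasSum_besselClifford (n + 1) y).mul_left (n + 1 : ℝ)).add euler
  have coeff (m : ℕ) : besselCliffordCoeff n m * y ^ m =
      (n + 1) * (besselCliffordCoeff (n + 1) m * y ^ m) +
        m * (besselCliffordCoeff (n + 1) m * y ^ m) := by
    rw [besselCliffordCoeff_eq_mul_besselCliffordCoeff_succ]
    ring
  linear_combination (hasSum_besselClifford n y).unique (hsum.congr_fun coeff)

theorem besselJ_eq_pow_mul_besselClifford (n : ℕ) (x : ℝ) :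
    besselJ n x = (x / 2) ^ n * besselClifford n ((x / 2) ^ 2) := by
  rw [besselJ, besselClifford, ← tsum_mul_left]
  refine tsum_congr fun m ↦ ?_
  rw [besselCliffordCoeff, pow_add, pow_mul]
  ring

theorem mul_besselJ_add_besselJ_add_two (n : ℕ) (x : ℝ) :
    x * (besselJ n x + besselJ (n + 2) x) = 2 * (n + 1) * besselJ (n + 1) x := by
  simp only [besselJ_eq_pow_mul_besselClifford]
  linear_combination
    x * (x / 2) ^ n * besselClifford_add_mul_besselClifford_add_two n ((x / 2) ^ 2)

theorem besselJ_add_two_of_besselJ_succ_eq_zero {n : ℕ} {x : ℝ} (hx : x ≠ 0)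
    (hJ : besselJ (n + 1) x = 0) : besselJ (n + 2) x = -besselJ n x := by
  have h := mul_besselJ_add_besselJ_add_two n x
  rw [hJ, mul_zero] at h
  exact eq_neg_of_add_eq_zero_right ((mul_eq_zero.1 h).resolve_left hx)

theorem hasDerivAt_besselJ (n : ℕ) (x : ℝ) :
    HasDerivAt (besselJ n)
      (n / 2 * (x / 2) ^ (n - 1) * besselClifford n ((x / 2) ^ 2)
        - (x / 2) ^ (n + 1) * besselClifford (n + 1) ((x / 2) ^ 2)) x := by
  have half : HasDerivAt (fun t : ℝ ↦ t / 2) (1 / 2) x := (hasDerivAt_id x).div_const 2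
  rw [funext (besselJ_eq_pow_mul_besselClifford n)]
  refine ((half.fun_pow n).fun_mul
    ((hasDerivAt_besselClifford n _).comp x (half.fun_pow 2))).congr_deriv ?_
  simp only [Function.comp_apply]
  ring

theorem differentiable_besselJ (n : ℕ) : Differentiable ℝ (besselJ n) :=
  fun x ↦ (hasDerivAt_besselJ n x).differentiableAt

@[fun_prop]
theorem continuous_besselJ (n : ℕ) : Continuous (besselJ n) :=
  (differentiable_besselJ n).continuous

theorem mul_deriv_besselJ (n : ℕ) (x : ℝ) :
    x * deriv (besselJ n) x = n * besselJ n x - x * besselJ (n + 1) x := by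
  rw [(hasDerivAt_besselJ n x).deriv, besselJ_eq_pow_mul_besselClifford,
    besselJ_eq_pow_mul_besselClifford]
  rcases n with _ | n
  · simp
  · rw [Nat.add_sub_cancel]
    ring

theorem mul_deriv_besselJ_succ (n : ℕ) (x : ℝ) :
    x * deriv (besselJ (n + 1)) x = x * besselJ n x - (n + 1) * besselJ (n + 1) x := by
  have h := mul_deriv_besselJ (n + 1) x
  push_cast at h
  linear_combination h - mul_besselJ_add_besselJ_add_two n x

section Lommel

variable (n : ℕ) (a b : ℝ)

theorem hasDerivAt_besselJ_const_mul (r : ℝ) :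
    HasDerivAt (fun r ↦ besselJ n (a * r)) (a * deriv (besselJ n) (a * r)) r := by
  rw [mul_comm a (deriv _ _)]
  exact (differentiable_besselJ n (a * r)).hasDerivAt.comp r (hasDerivAt_const_mul a)

theorem hasDerivAt_mul_besselJ_succ_mul_besselJ (r : ℝ) :
    HasDerivAt (fun r ↦ r * (besselJ (n + 1) (a * r) * besselJ n (b * r)))
      (r * (a * (besselJ n (a * r) * besselJ n (b * r))
        - b * (besselJ (n + 1) (a * r) * besselJ (n + 1) (b * r)))) r := by
  refine ((hasDerivAt_id' r).fun_mul ((hasDerivAt_besselJ_const_mul (n + 1) a r).fun_mul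
    (hasDerivAt_besselJ_const_mul n b r))).congr_deriv ?_
  linear_combination besselJ n (b * r) * mul_deriv_besselJ_succ n (a * r)
    + besselJ (n + 1) (a * r) * mul_deriv_besselJ n (b * r)

theorem hasDerivAt_sq_mul_besselJ_mul_besselJ (r : ℝ) :
    HasDerivAt (fun r ↦ r ^ 2 * (besselJ n (a * r) * besselJ n (b * r)))
      (2 * (n + 1) * (r * (besselJ n (a * r) * besselJ n (b * r)))
        - r ^ 2 * (a * (besselJ (n + 1) (a * r) * besselJ n (b * r))
          + b * (besselJ n (a * r) * besselJ (n + 1) (b * r)))) r := by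
  refine ((hasDerivAt_pow 2 r).fun_mul ((hasDerivAt_besselJ_const_mul n a r).fun_mul
    (hasDerivAt_besselJ_const_mul n b r))).congr_deriv ?_
  linear_combination r * besselJ n (b * r) * mul_deriv_besselJ n (a * r)
    + r * besselJ n (a * r) * mul_deriv_besselJ n (b * r)

theorem hasDerivAt_sq_mul_besselJ_succ_mul_besselJ_succ (r : ℝ) :
    HasDerivAt (fun r ↦ r ^ 2 * (besselJ (n + 1) (a * r) * besselJ (n + 1) (b * r)))
      (r ^ 2 * (a * (besselJ n (a * r) * besselJ (n + 1) (b * r))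
          + b * (besselJ (n + 1) (a * r) * besselJ n (b * r)))
        - 2 * n * (r * (besselJ (n + 1) (a * r) * besselJ (n + 1) (b * r)))) r := by
  refine ((hasDerivAt_pow 2 r).fun_mul ((hasDerivAt_besselJ_const_mul (n + 1) a r).fun_mul
    (hasDerivAt_besselJ_const_mul (n + 1) b r))).congr_deriv ?_
  linear_combination r * besselJ (n + 1) (b * r) * mul_deriv_besselJ_succ n (a * r)
    + r * besselJ (n + 1) (a * r) * mul_deriv_besselJ_succ n (b * r)

theorem hasDerivAt_mul_sq_mul_besselJ_succ_add_mul_sq_mul_besselJ (r : ℝ) :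
    HasDerivAt
      (fun r ↦ a * (r ^ 2 * (besselJ (n + 1) (a * r) * besselJ (n + 1) (b * r)))
        + b * (r ^ 2 * (besselJ n (a * r) * besselJ n (b * r))))
      ((a ^ 2 - b ^ 2) * (r ^ 2 * besselJ n (a * r) * besselJ (n + 1) (b * r))
        - 2 * n * a * (r * (besselJ (n + 1) (a * r) * besselJ (n + 1) (b * r)))
        + 2 * (n + 1) * b * (r * (besselJ n (a * r) * besselJ n (b * r)))) r := by
  refine (((hasDerivAt_sq_mul_besselJ_succ_mul_besselJ_succ n a b r).const_mul a).fun_add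
    ((hasDerivAt_sq_mul_besselJ_mul_besselJ n a b r).const_mul b)).congr_deriv ?_
  ring

theorem sq_sub_sq_mul_integral_mul_besselJ_mul_besselJ (x : ℝ) :
    (a ^ 2 - b ^ 2) * ∫ r in (0 : ℝ)..x, r * (besselJ n (a * r) * besselJ n (b * r)) =
      x * (a * (besselJ (n + 1) (a * x) * besselJ n (b * x))
        - b * (besselJ n (a * x) * besselJ (n + 1) (b * x))) := by
  have antideriv (r : ℝ) := ((hasDerivAt_mul_besselJ_succ_mul_besselJ n a b r).const_mul a).fun_sub
    ((hasDerivAt_mul_besselJ_succ_mul_besselJ n b a r).const_mul b)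
  rw [← intervalIntegral.integral_const_mul]
  convert intervalIntegral.integral_eq_sub_of_hasDerivAt (a := 0) (b := x)
    (fun r _ ↦ antideriv r) (Continuous.intervalIntegrable (by fun_prop) _ _) using 1
  · congr! 2
    ring
  · ring

theorem sq_sub_sq_mul_integral_sq_mul_besselJ_mul_besselJ_succ (x : ℝ) :
    (a ^ 2 - b ^ 2) * ∫ r in (0 : ℝ)..x, r ^ 2 * besselJ n (a * r) * besselJ (n + 1) (b * r) =
      x ^ 2 * (a * (besselJ (n + 1) (a * x) * besselJ (n + 1) (b * x))
          + b * (besselJ n (a * x) * besselJ n (b * x)))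
        + 2 * n * a * (∫ r in (0 : ℝ)..x, r * (besselJ (n + 1) (a * r) * besselJ (n + 1) (b * r)))
        - 2 * (n + 1) * b * ∫ r in (0 : ℝ)..x, r * (besselJ n (a * r) * besselJ n (b * r)) := by
  have boundary := intervalIntegral.integral_eq_sub_of_hasDerivAt (a := 0) (b := x)
    (fun r _ ↦ hasDerivAt_mul_sq_mul_besselJ_succ_add_mul_sq_mul_besselJ n a b r)
    (Continuous.intervalIntegrable (by fun_prop) _ _)
  rw [intervalIntegral.integral_add, intervalIntegral.integral_sub,
    intervalIntegral.integral_const_mul, intervalIntegral.integral_const_mul,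
    intervalIntegral.integral_const_mul] at boundary
  · linear_combination boundary
  all_goals exact Continuous.intervalIntegrable (by fun_prop) _ _

end Lommel

theorem integral_mul_besselJ_mul_besselJ_eq_zero {n : ℕ} {a b : ℝ} (hab : a ^ 2 ≠ b ^ 2)
    (h : a * (besselJ (n + 1) a * besselJ n b) = b * (besselJ n a * besselJ (n + 1) b)) :
    ∫ r in (0 : ℝ)..1, r * (besselJ n (a * r) * besselJ n (b * r)) = 0 := by
  refine (mul_eq_zero.1 ?_).resolve_left (sub_ne_zero.2 hab)
  rw [sq_sub_sq_mul_integral_mul_besselJ_mul_besselJ, mul_one, mul_one, h, sub_self, mul_zero]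

/-- If `ν ≥ 1` and `a ≠ b` are positive zeros of `J_ν` then
`∫_0^1 r² J_{ν-1}(ar) J_ν(br) dr = b J_{ν+1}(a) J_{ν+1}(b) / (a² - b²)`. -/
theorem stmt4 (ν : ℕ) (hν : 1 ≤ ν) (a b : ℝ) (ha : 0 < a) (hb : 0 < b)
    (hab : a ≠ b) (hJa : besselJ ν a = 0) (hJb : besselJ ν b = 0) :
    ∫ r in (0 : ℝ)..1, r ^ 2 * besselJ (ν - 1) (a * r) * besselJ ν (b * r) =
      b * besselJ (ν + 1) a * besselJ (ν + 1) b / (a ^ 2 - b ^ 2) := by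
  obtain ⟨n, rfl⟩ := Nat.exists_eq_add_of_le' hν
  have hsq : a ^ 2 ≠ b ^ 2 := fun h ↦ hab ((sq_eq_sq₀ ha.le hb.le).1 h)
  have orthogonal : ∫ r in (0 : ℝ)..1, r * (besselJ n (a * r) * besselJ n (b * r)) = 0 :=
    integral_mul_besselJ_mul_besselJ_eq_zero hsq (by simp [hJa, hJb])
  have orthogonal_succ :
      ∫ r in (0 : ℝ)..1, r * (besselJ (n + 1) (a * r) * besselJ (n + 1) (b * r)) = 0 :=
    integral_mul_besselJ_mul_besselJ_eq_zero hsq (by simp [hJa, hJb])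
  have key := sq_sub_sq_mul_integral_sq_mul_besselJ_mul_besselJ_succ n a b 1
  rw [orthogonal, orthogonal_succ, mul_one, mul_one, hJa, hJb] at key
  rw [Nat.add_sub_cancel, eq_div_iff (sub_ne_zero.2 hsq),
    besselJ_add_two_of_besselJ_succ_eq_zero ha.ne' hJa,
    besselJ_add_two_of_besselJ_succ_eq_zero hb.ne' hJb]
  linear_combination key
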